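/- arXiv:1404.7098 — 2 statements merged into one kernel-verified Lean document; each statement's English description precedes it below -/
import Mathlib

section
/- Fix μ>0. Let A be a real 5×5 matrix preserving the bilinear form ⟨·,·⟩₍₁,₄₎ (i.e. ⟨AW,AW′⟩₍₁,₄₎=⟨W,W′⟩₍₁,₄₎ for all W,W′) such that the 0-th component of A·X̂ is positive for every X∈ℝ⁴, and define T_A:ℝ⁴→ℝ⁴ by T_A(X) = ((A·X̂)¹,(A·X̂)²,(A·X̂)³,(A·X̂)⁴) (so that A·X̂ = (T_A(X))-hat). If φ:ℝ⁴→ℂ is smooth and □̃_μφ = 0 on ℝ⁴, then □̃_μ(φ∘T_A) = 0 on ℝ⁴. -/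
noncomputable section

/-- `N(X) = (x⁰)² + (x¹)² + (x²)² + (x³)²` for `X ∈ ℝ⁴`. -/
def Nq (X : Fin 4 → ℝ) : ℝ := ∑ i, X i ^ 2

/-- The indefinite inner product `⟨W,W′⟩₍₁,₄₎` on `ℝ⁵`. -/
def form14 (W W' : Fin 5 → ℝ) : ℝ :=
  W 0 * W' 0 - W 1 * W' 1 - W 2 * W' 2 - W 3 * W' 3 - W 4 * W' 4

/-- `X̂ = (√(μ⁻² + N(X)), x⁰, x¹, x², x³) ∈ ℝ⁵`. -/
def hat (μ : ℝ) (X : Fin 4 → ℝ) : Fin 5 → ℝ :=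
  Fin.cons (Real.sqrt ((μ ^ 2)⁻¹ + Nq X)) X

/-- The `i`-th standard basis vector of `ℝ⁴`. -/
def e4 (i : Fin 4) : Fin 4 → ℝ := Pi.single i 1

/-- The partial derivative `∂f/∂xⁱ` of a `ℂ`-valued function on `ℝ⁴`. -/
def pd (i : Fin 4) (f : (Fin 4 → ℝ) → ℂ) (X : Fin 4 → ℝ) : ℂ := fderiv ℝ f X (e4 i)

/-- The Laplacian `□f = Σᵢ ∂²f/∂(xⁱ)²`. -/
def lap (f : (Fin 4 → ℝ) → ℂ) (X : Fin 4 → ℝ) : ℂ := ∑ i, pd i (pd i f) X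

/-- The degree operator `deg f = Σᵢ xⁱ ∂f/∂xⁱ`. -/
def degOp (f : (Fin 4 → ℝ) → ℂ) (X : Fin 4 → ℝ) : ℂ := ∑ i, (X i : ℂ) * pd i f X

/-- The conformal Laplacian `□̃_μ f = □f + μ²(deg(deg f) + 3·deg f + 2f)`. -/
def boxTilde (μ : ℝ) (f : (Fin 4 → ℝ) → ℂ) (X : Fin 4 → ℝ) : ℂ :=
  lap f X + (μ ^ 2 : ℝ) * (degOp (degOp f) X + 3 * degOp f X + 2 * f X)

/-!
In the coordinates `X ↦ X̂` the operator `□̃_μ - 2μ²` is the Laplace–Beltrami operator of the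
hyperboloid `⟨W,W⟩ = μ⁻²`. It is the restriction of an operator on the ambient space: for any `C²`
function `F` on `ℝ⁵`,
`□̃_μ (F ∘ hat) - 2μ² F ∘ hat = (-□_{1,4} F + μ² (E² + 3E) F) ∘ hat`,
where `E` is the Euler operator of `ℝ⁵`. By the chain rule this amounts to two facts about
the embedding `hat`: it pushes the cometric `1 + μ² X Xᵀ` forward to `-η + μ² X̂ X̂ᵀ`, where `η` is
the Gram matrix of the form, and its components are eigenfunctions with eigenvalue `4μ²`. The
ambient operator has constant coefficients apart from `E`, so under a linear substitution only the
matrix `-η` changes, and the last four rows `B` of `A ∈ O(1,4)` satisfy `B (-η) Bᵀ = 1`.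
-/

open Matrix

section SecondDerivative

variable {𝕜 E F G : Type*} [NontriviallyNormedField 𝕜] [NormedAddCommGroup E] [NormedSpace 𝕜 E]
  [NormedAddCommGroup F] [NormedSpace 𝕜 F] [NormedAddCommGroup G] [NormedSpace 𝕜 G]

lemma differentiable_fderiv_of_contDiff_two {f : E → F} (hf : ContDiff 𝕜 2 f) :
    Differentiable 𝕜 (fderiv 𝕜 f) :=
  (hf.fderiv_right (m := 1) (by norm_num)).differentiable one_ne_zero

lemma fderiv_fderiv_apply_const {f : E → F} (hf : ContDiff 𝕜 2 f) (x u v : E) :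
    fderiv 𝕜 (fun y => fderiv 𝕜 f y v) x u = fderiv 𝕜 (fderiv 𝕜 f) x u v := by
  simp [fderiv_clm_apply (differentiable_fderiv_of_contDiff_two hf x)]

lemma fderiv_fderiv_apply_self {f : E → F} (hf : ContDiff 𝕜 2 f) (x u : E) :
    fderiv 𝕜 (fun y => fderiv 𝕜 f y y) x u =
      fderiv 𝕜 (fderiv 𝕜 f) x u x + fderiv 𝕜 f x u := by
  simp [fderiv_clm_apply (differentiable_fderiv_of_contDiff_two hf x) differentiableAt_fun_id,
    add_comm]

lemma fderiv_fderiv_comp {f : F → G} {g : E → F} (hf : ContDiff 𝕜 2 f) (hg : ContDiff 𝕜 2 g)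
    (x u v : E) :
    fderiv 𝕜 (fderiv 𝕜 (f ∘ g)) x u v =
      fderiv 𝕜 (fderiv 𝕜 f) (g x) (fderiv 𝕜 g x u) (fderiv 𝕜 g x v) +
        fderiv 𝕜 f (g x) (fderiv 𝕜 (fderiv 𝕜 g) x u v) := by
  have hdf : Differentiable 𝕜 f := hf.differentiable two_ne_zero
  have hdg : Differentiable 𝕜 g := hg.differentiable two_ne_zero
  have fderiv_comp_eq : fderiv 𝕜 (f ∘ g) = fun y => (fderiv 𝕜 f (g y)).comp (fderiv 𝕜 g y) :=
    funext fun y => fderiv_comp y (hdf (g y)) (hdg y)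
  have hasFDerivAt_fderiv_comp :
      HasFDerivAt (fun y => (fderiv 𝕜 f (g y)).comp (fderiv 𝕜 g y)) _ x :=
    ((differentiable_fderiv_of_contDiff_two hf (g x)).hasFDerivAt.comp x
      (hdg x).hasFDerivAt).clm_comp (differentiable_fderiv_of_contDiff_two hg x).hasFDerivAt
  rw [fderiv_comp_eq, hasFDerivAt_fderiv_comp.fderiv]
  simp [add_comm]

lemma fderiv_fderiv_clm (L : E →L[𝕜] F) (x : E) : fderiv 𝕜 (fderiv 𝕜 L) x = 0 := by
  simp [funext fun y => L.fderiv (x := y)]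

end SecondDerivative

section Contraction

variable {ι κ G : Type*} [Fintype ι] [DecidableEq ι] [Fintype κ] [DecidableEq κ]
  [NormedAddCommGroup G] [NormedSpace ℝ G]

/-- The full contraction `∑ᵢⱼ Mᵢⱼ Q(eᵢ, eⱼ)` of a matrix, regarded as a contravariant 2-tensor,
with a vector-valued bilinear map. Applied to a Hessian it gives the operator `∑ᵢⱼ Mᵢⱼ ∂ᵢ∂ⱼ`. -/
def matrixContract (M : Matrix ι ι ℝ) (Q : (ι → ℝ) →L[ℝ] (ι → ℝ) →L[ℝ] G) : G :=
  ∑ i, ∑ j, M i j • Q (Pi.single i 1) (Pi.single j 1)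

lemma matrixContract_add (M N : Matrix ι ι ℝ) (Q : (ι → ℝ) →L[ℝ] (ι → ℝ) →L[ℝ] G) :
    matrixContract (M + N) Q = matrixContract M Q + matrixContract N Q := by
  simp [matrixContract, add_smul, Finset.sum_add_distrib]

lemma matrixContract_smul (c : ℝ) (M : Matrix ι ι ℝ) (Q : (ι → ℝ) →L[ℝ] (ι → ℝ) →L[ℝ] G) :
    matrixContract (c • M) Q = c • matrixContract M Q := by
  simp [matrixContract, mul_smul, Finset.smul_sum]

lemma matrixContract_one (Q : (ι → ℝ) →L[ℝ] (ι → ℝ) →L[ℝ] G) :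
    matrixContract 1 Q = ∑ i, Q (Pi.single i 1) (Pi.single i 1) := by
  simp [matrixContract, Matrix.one_apply]

lemma clm_apply_eq_sum_single (L : (ι → ℝ) →L[ℝ] G) (v : ι → ℝ) :
    L v = ∑ i, v i • L (Pi.single i 1) := by
  conv_lhs => rw [pi_eq_sum_univ' v]
  simp only [map_sum, map_smul]

lemma clm_apply_apply_eq_sum_single (Q : (ι → ℝ) →L[ℝ] (ι → ℝ) →L[ℝ] G) (u v : ι → ℝ) :
    Q u v = ∑ i, ∑ j, (u i * v j) • Q (Pi.single i 1) (Pi.single j 1) := by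
  rw [clm_apply_eq_sum_single Q u]
  simp only [_root_.sum_apply, _root_.smul_apply, clm_apply_eq_sum_single (Q _) v,
    Finset.smul_sum, mul_smul]

lemma matrixContract_vecMulVec (u v : ι → ℝ) (Q : (ι → ℝ) →L[ℝ] (ι → ℝ) →L[ℝ] G) :
    matrixContract (vecMulVec u v) Q = Q u v :=
  (clm_apply_apply_eq_sum_single Q u v).symm

lemma sum_smul_apply_mulVec_single (J : Matrix κ ι ℝ) (M : Matrix ι ι ℝ)
    (Q : (κ → ℝ) →L[ℝ] (κ → ℝ) →L[ℝ] G) :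
    ∑ i, ∑ j, M i j • Q (J *ᵥ Pi.single i 1) (J *ᵥ Pi.single j 1) =
      matrixContract (J * M * Jᵀ) Q := by
  simp only [mulVec_single_one, clm_apply_apply_eq_sum_single Q (J.col _), matrixContract,
    Matrix.mul_apply, transpose_apply, col_apply, Finset.sum_mul, Finset.sum_smul,
    Finset.smul_sum, smul_smul]
  rw [Finset.sum_comm_cycle]
  refine Finset.sum_congr rfl fun k _ => ?_
  rw [Finset.sum_comm_cycle]
  refine Finset.sum_congr rfl fun l _ => ?_
  rw [Finset.sum_comm]
  refine Finset.sum_congr rfl fun j _ => Finset.sum_congr rfl fun i _ => ?_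
  rw [mul_left_comm, mul_assoc]

lemma matrixContract_fderiv_fderiv_comp {f : (κ → ℝ) → G} {g : (ι → ℝ) → κ → ℝ}
    (hf : ContDiff ℝ 2 f) (hg : ContDiff ℝ 2 g) {X : ι → ℝ} {J : Matrix κ ι ℝ}
    (hJ : ∀ u, fderiv ℝ g X u = J *ᵥ u) (M : Matrix ι ι ℝ) :
    matrixContract M (fderiv ℝ (fderiv ℝ (f ∘ g)) X) =
      matrixContract (J * M * Jᵀ) (fderiv ℝ (fderiv ℝ f) (g X)) +
        fderiv ℝ f (g X) (matrixContract M (fderiv ℝ (fderiv ℝ g) X)) := by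
  rw [← sum_smul_apply_mulVec_single]
  simp only [matrixContract, fderiv_fderiv_comp hf hg, hJ, smul_add,
    Finset.sum_add_distrib, map_sum, map_smul]

end Contraction

section EulerLaplacian

variable {ι κ G H : Type*} [Fintype ι] [DecidableEq ι] [Fintype κ] [DecidableEq κ]
  [NormedAddCommGroup G] [NormedSpace ℝ G] [NormedAddCommGroup H] [NormedSpace ℝ H]

/-- The operator `∑ᵢⱼ Mᵢⱼ ∂ᵢ∂ⱼ + c (E² + (m - 1) E)`, where `E = ∑ᵢ xⁱ ∂ᵢ` is the Euler operator.
The second-order terms are collected in the `X`-dependent cometric `M + c X Xᵀ`. For `M = 1`,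
`c = μ²` and `m` the dimension it is the Laplace–Beltrami operator of the hyperboloid of radius
`μ⁻¹`. -/
def eulerLaplacian (M : Matrix ι ι ℝ) (c m : ℝ) (f : (ι → ℝ) → G) (X : ι → ℝ) : G :=
  matrixContract (M + c • vecMulVec X X) (fderiv ℝ (fderiv ℝ f) X) + (c * m) • fderiv ℝ f X X

lemma eulerLaplacian_clm_comp (L : G →L[ℝ] H) {f : (ι → ℝ) → G} (hf : ContDiff ℝ 2 f)
    (M : Matrix ι ι ℝ) (c m : ℝ) (X : ι → ℝ) :
    eulerLaplacian M c m (L ∘ f) X = L (eulerLaplacian M c m f X) := by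
  have hdf : DifferentiableAt ℝ f X := hf.differentiable two_ne_zero X
  simp [eulerLaplacian, matrixContract, fderiv_fderiv_comp L.contDiff hf,
    fderiv_fderiv_clm, fderiv_comp X L.differentiableAt hdf]

lemma eulerLaplacian_clm (L : (ι → ℝ) →L[ℝ] G) (M : Matrix ι ι ℝ) (c m : ℝ) (X : ι → ℝ) :
    eulerLaplacian M c m L X = (c * m) • L X := by
  simp [eulerLaplacian, matrixContract, fderiv_fderiv_clm]

lemma eulerLaplacian_comp_mulVec (B : Matrix κ ι ℝ) {f : (κ → ℝ) → G} (hf : ContDiff ℝ 2 f)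
    (M : Matrix ι ι ℝ) (c m : ℝ) (W : ι → ℝ) :
    eulerLaplacian M c m (fun V => f (B *ᵥ V)) W =
      eulerLaplacian (B * M * Bᵀ) c m f (B *ᵥ W) := by
  let L : (ι → ℝ) →L[ℝ] (κ → ℝ) := B.mulVecLin.toContinuousLinearMap
  have cometric_eq : B * (M + c • vecMulVec W W) * Bᵀ =
      B * M * Bᵀ + c • vecMulVec (B *ᵥ W) (B *ᵥ W) := by
    simp [Matrix.mul_add, Matrix.add_mul, mul_vecMulVec, vecMulVec_mul, vecMul_transpose]
  have fderiv_comp_eq : fderiv ℝ (f ∘ L) W W = fderiv ℝ f (B *ᵥ W) (B *ᵥ W) := by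
    rw [fderiv_comp W (hf.differentiable two_ne_zero _) L.differentiableAt, L.fderiv]
    rfl
  have hessian_comp_eq := matrixContract_fderiv_fderiv_comp (X := W) (J := B) hf L.contDiff
    (fun u => by rw [L.fderiv]; rfl) (M + c • vecMulVec W W)
  have zero_eq : fderiv ℝ f (L W) (matrixContract (M + c • vecMulVec W W) 0) = 0 := by
    simp [matrixContract]
  rw [fderiv_fderiv_clm, cometric_eq, zero_eq, add_zero] at hessian_comp_eq
  exact congr($hessian_comp_eq + (c * m) • $fderiv_comp_eq)

end EulerLaplacian

section Hyperboloid

variable {n : ℕ} {c : ℝ}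

/-- The height `√(c⁻¹ + |X|²)` at which the upper sheet of the hyperboloid of radius `c^(-1/2)`
lies over `X`. -/
def hyperboloidHeight (c : ℝ) (X : Fin n → ℝ) : ℝ := √(c⁻¹ + X ⬝ᵥ X)

/-- The parametrization of the upper sheet of the hyperboloid of radius `c^(-1/2)` in `ℝ¹⁺ⁿ` by its
last `n` coordinates; `hat μ` is the case `n = 4`, `c = μ²`. -/
def hyperboloidLift (c : ℝ) (X : Fin n → ℝ) : Fin (n + 1) → ℝ :=
  Fin.cons (hyperboloidHeight c X) X

/-- The Gram matrix `diag(1, -1, …, -1)` of the Minkowski form on `ℝ¹⁺ⁿ`. -/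
def minkowskiMatrix (n : ℕ) : Matrix (Fin (n + 1)) (Fin (n + 1)) ℝ :=
  diagonal (Fin.cons 1 fun _ => -1)

lemma inv_add_dotProduct_self_pos (hc : 0 < c) (X : Fin n → ℝ) : 0 < c⁻¹ + X ⬝ᵥ X :=
  add_pos_of_pos_of_nonneg (inv_pos.2 hc) (Finset.sum_nonneg fun i _ => mul_self_nonneg (X i))

lemma hyperboloidHeight_pos (hc : 0 < c) (X : Fin n → ℝ) : 0 < hyperboloidHeight c X :=
  Real.sqrt_pos.2 (inv_add_dotProduct_self_pos hc X)

lemma hyperboloidHeight_mul_self (hc : 0 < c) (X : Fin n → ℝ) :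
    hyperboloidHeight c X * hyperboloidHeight c X = c⁻¹ + X ⬝ᵥ X :=
  Real.mul_self_sqrt (inv_add_dotProduct_self_pos hc X).le

lemma dotProduct_self_eq_hyperboloidHeight_mul_self_sub (hc : 0 < c) (X : Fin n → ℝ) :
    X ⬝ᵥ X = hyperboloidHeight c X * hyperboloidHeight c X - c⁻¹ := by
  rw [hyperboloidHeight_mul_self hc, add_sub_cancel_left]

lemma contDiff_hyperboloidHeight (hc : 0 < c) :
    ContDiff ℝ 2 (hyperboloidHeight c : (Fin n → ℝ) → ℝ) := by
  refine ContDiff.sqrt ?_ fun X => (inv_add_dotProduct_self_pos hc X).ne'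
  unfold dotProduct
  fun_prop

lemma contDiff_hyperboloidLift (hc : 0 < c) :
    ContDiff ℝ 2 (hyperboloidLift c : (Fin n → ℝ) → Fin (n + 1) → ℝ) :=
  contDiff_pi.2 <| Fin.cases (contDiff_hyperboloidHeight hc) (contDiff_apply ℝ ℝ)

lemma fderiv_dotProduct_const (v X u : Fin n → ℝ) :
    fderiv ℝ (· ⬝ᵥ v) X u = u ⬝ᵥ v :=
  congr($(((dotProductBilin ℝ ℝ).flip v).toContinuousLinearMap.fderiv) u)

lemma fderiv_dotProduct_self (X u : Fin n → ℝ) :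
    fderiv ℝ (fun Y => Y ⬝ᵥ Y) X u = 2 * (X ⬝ᵥ u) := by
  have h : HasFDerivAt (fun Y : Fin n → ℝ => Y ⬝ᵥ Y) _ X :=
    ((dotProductBilin ℝ ℝ).toContinuousBilinearMap.hasFDerivAt).clm_apply (hasFDerivAt_id X)
  rw [h.fderiv]
  simp [dotProduct_comm u X, two_mul]

lemma hyperboloidHeight_mul_fderiv (hc : 0 < c) (X u : Fin n → ℝ) :
    hyperboloidHeight c X * fderiv ℝ (hyperboloidHeight c) X u = X ⬝ᵥ u := by
  have hd : DifferentiableAt ℝ (hyperboloidHeight c) X :=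
    (contDiff_hyperboloidHeight hc).differentiable two_ne_zero X
  have fderiv_sq := congr(fderiv ℝ $(funext (hyperboloidHeight_mul_self (n := n) hc)) X u)
  rw [fderiv_fun_mul hd hd, fderiv_const_add, fderiv_dotProduct_self] at fderiv_sq
  simp only [_root_.add_apply, _root_.smul_apply, smul_eq_mul] at fderiv_sq
  linarith

lemma hyperboloidHeight_mul_fderiv_fderiv (hc : 0 < c) (X u v : Fin n → ℝ) :
    hyperboloidHeight c X * fderiv ℝ (fderiv ℝ (hyperboloidHeight c)) X u v =
      u ⬝ᵥ v - fderiv ℝ (hyperboloidHeight c) X u * fderiv ℝ (hyperboloidHeight c) X v := by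
  have hh := contDiff_hyperboloidHeight (n := n) hc
  have hd : DifferentiableAt ℝ (hyperboloidHeight c) X := hh.differentiable two_ne_zero X
  have hd' : DifferentiableAt ℝ (fun Y => fderiv ℝ (hyperboloidHeight c) Y v) X :=
    (differentiable_fderiv_of_contDiff_two hh X).clm_apply (differentiableAt_const v)
  have fderiv_eq := congr(fderiv ℝ $(funext fun Y => hyperboloidHeight_mul_fderiv hc Y v) X u)
  rw [fderiv_fun_mul hd hd', fderiv_dotProduct_const] at fderiv_eq
  simp only [_root_.add_apply, _root_.smul_apply, fderiv_fderiv_apply_const hh,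
    smul_eq_mul] at fderiv_eq
  linarith

/-- The Jacobian matrix of `hyperboloidLift c` at `X`. -/
def hyperboloidJacobian (c : ℝ) (X : Fin n → ℝ) : Matrix (Fin (n + 1)) (Fin n) ℝ :=
  of (Fin.cons ((hyperboloidHeight c X)⁻¹ • X) fun i => Pi.single i 1)

lemma hyperboloidJacobian_zero (c : ℝ) (X : Fin n → ℝ) :
    hyperboloidJacobian c X 0 = (hyperboloidHeight c X)⁻¹ • X := rfl

lemma hyperboloidJacobian_succ (c : ℝ) (X : Fin n → ℝ) (i : Fin n) :
    hyperboloidJacobian c X i.succ = Pi.single i 1 := rfl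

lemma hyperboloidJacobian_mulVec (c : ℝ) (X u : Fin n → ℝ) :
    hyperboloidJacobian c X *ᵥ u = Fin.cons ((hyperboloidHeight c X)⁻¹ * (X ⬝ᵥ u)) u := by
  ext a
  cases a using Fin.cases with
  | zero => exact smul_dotProduct (hyperboloidHeight c X)⁻¹ X u
  | succ i => exact single_one_dotProduct i u

lemma hyperboloidJacobian_mul_transpose_apply (c : ℝ) (X : Fin n → ℝ) (a b : Fin (n + 1)) :
    (hyperboloidJacobian c X * (hyperboloidJacobian c X)ᵀ) a b =
      (Fin.cons ((hyperboloidHeight c X)⁻¹ * (X ⬝ᵥ hyperboloidJacobian c X b))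
        (hyperboloidJacobian c X b) : Fin (n + 1) → ℝ) a := by
  rw [← hyperboloidJacobian_mulVec]
  rfl

lemma fderiv_hyperboloidHeight (hc : 0 < c) (X u : Fin n → ℝ) :
    fderiv ℝ (hyperboloidHeight c) X u = (hyperboloidHeight c X)⁻¹ * (X ⬝ᵥ u) := by
  rw [← hyperboloidHeight_mul_fderiv hc, inv_mul_cancel_left₀ (hyperboloidHeight_pos hc X).ne']

lemma fderiv_hyperboloidLift (hc : 0 < c) (X u : Fin n → ℝ) :
    fderiv ℝ (hyperboloidLift c) X u = hyperboloidJacobian c X *ᵥ u := by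
  have hasFDerivAt_lift : HasFDerivAt (hyperboloidLift c) _ X :=
    HasFDerivAt.finCons
      ((contDiff_hyperboloidHeight hc).differentiable two_ne_zero X).hasFDerivAt (hasFDerivAt_id X)
  rw [hasFDerivAt_lift.fderiv, hyperboloidJacobian_mulVec, ← fderiv_hyperboloidHeight hc]
  rfl

lemma hyperboloidJacobian_mul_cometric_mul_transpose (hc : 0 < c) (X : Fin n → ℝ) :
    hyperboloidJacobian c X * (1 + c • vecMulVec X X) * (hyperboloidJacobian c X)ᵀ =
      -minkowskiMatrix n + c • vecMulVec (hyperboloidLift c X) (hyperboloidLift c X) := by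
  have hρ := (hyperboloidHeight_pos hc X).ne'
  simp only [Matrix.mul_add, Matrix.add_mul, Matrix.mul_one, Matrix.mul_smul, Matrix.smul_mul,
    mul_vecMulVec, vecMulVec_mul, vecMul_transpose, hyperboloidJacobian_mulVec]
  ext a b
  rw [Matrix.add_apply, hyperboloidJacobian_mul_transpose_apply]
  simp only [dotProduct_self_eq_hyperboloidHeight_mul_self_sub hc, minkowskiMatrix, diagonal_neg,
    hyperboloidLift, Matrix.add_apply, Matrix.smul_apply, vecMulVec_apply, smul_eq_mul]
  cases a using Fin.cases with
  | zero =>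
    cases b using Fin.cases with
    | zero =>
      simp only [hyperboloidJacobian_zero, dotProduct_smul, smul_eq_mul, Fin.cons_zero,
        dotProduct_self_eq_hyperboloidHeight_mul_self_sub hc, diagonal_apply_eq]
      field_simp
      ring
    | succ j =>
      simp only [hyperboloidJacobian_succ, dotProduct_single_one, Fin.cons_zero, Fin.cons_succ,
        diagonal_apply_ne _ j.succ_ne_zero.symm]
      field_simp
      ring
  | succ i =>
    cases b using Fin.cases with
    | zero =>
      simp only [hyperboloidJacobian_zero, Pi.smul_apply, smul_eq_mul, Fin.cons_zero, Fin.cons_succ,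
        diagonal_apply_ne _ i.succ_ne_zero]
      field_simp
      ring
    | succ j => simp [hyperboloidJacobian_succ, diagonal_apply, Pi.single_apply]

lemma eulerLaplacian_hyperboloidHeight (hc : 0 < c) (X : Fin n → ℝ) :
    eulerLaplacian 1 c n (hyperboloidHeight c) X = c * n * hyperboloidHeight c X := by
  have hρ := (hyperboloidHeight_pos hc X).ne'
  have hessian_eq : ∀ u v, fderiv ℝ (fderiv ℝ (hyperboloidHeight c)) X u v =
      (hyperboloidHeight c X)⁻¹ * (u ⬝ᵥ v - (hyperboloidHeight c X)⁻¹ * (X ⬝ᵥ u) *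
        ((hyperboloidHeight c X)⁻¹ * (X ⬝ᵥ v))) := fun u v => by
    rw [← fderiv_hyperboloidHeight hc, ← fderiv_hyperboloidHeight hc,
      ← hyperboloidHeight_mul_fderiv_fderiv hc, inv_mul_cancel_left₀ hρ]
  have trace_eq :
      ∑ i, fderiv ℝ (fderiv ℝ (hyperboloidHeight c)) X (Pi.single i 1) (Pi.single i 1) =
        (hyperboloidHeight c X)⁻¹ * (n - (hyperboloidHeight c X)⁻¹ ^ 2 * (X ⬝ᵥ X)) := by
    simp only [hessian_eq, dotProduct_single_one, Pi.single_eq_same, ← Finset.mul_sum,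
      Finset.sum_sub_distrib, mul_mul_mul_comm _ (X _)]
    simp [dotProduct, sq]
  rw [eulerLaplacian, matrixContract_add, matrixContract_smul, matrixContract_one,
    matrixContract_vecMulVec, trace_eq, hessian_eq, fderiv_hyperboloidHeight hc,
    dotProduct_self_eq_hyperboloidHeight_mul_self_sub hc]
  simp only [smul_eq_mul]
  field_simp
  ring

lemma eulerLaplacian_hyperboloidLift (hc : 0 < c) (X : Fin n → ℝ) :
    eulerLaplacian 1 c n (hyperboloidLift c) X = (c * n) • hyperboloidLift c X := by
  ext a
  let coord : (Fin (n + 1) → ℝ) →L[ℝ] ℝ := ContinuousLinearMap.proj a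
  refine (eulerLaplacian_clm_comp coord (contDiff_hyperboloidLift hc) 1 c n X).symm.trans ?_
  cases a using Fin.cases with
  | zero => exact eulerLaplacian_hyperboloidHeight hc X
  | succ i => exact eulerLaplacian_clm (ContinuousLinearMap.proj i) 1 c n X

lemma eulerLaplacian_comp_hyperboloidLift {G : Type*} [NormedAddCommGroup G] [NormedSpace ℝ G]
    (hc : 0 < c) {F : (Fin (n + 1) → ℝ) → G} (hF : ContDiff ℝ 2 F) (X : Fin n → ℝ) :
    eulerLaplacian 1 c n (fun Y => F (hyperboloidLift c Y)) X =
      eulerLaplacian (-minkowskiMatrix n) c n F (hyperboloidLift c X) := by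
  have hh := contDiff_hyperboloidLift (n := n) hc
  have hessian_comp_eq := matrixContract_fderiv_fderiv_comp hF hh (fderiv_hyperboloidLift hc X)
    (1 + c • vecMulVec X X)
  have fderiv_comp_eq : fderiv ℝ (F ∘ hyperboloidLift c) X X =
      fderiv ℝ F (hyperboloidLift c X) (fderiv ℝ (hyperboloidLift c) X X) := by
    rw [fderiv_comp X (hF.differentiable two_ne_zero _) (hh.differentiable two_ne_zero X)]
    rfl
  calc eulerLaplacian 1 c n (F ∘ hyperboloidLift c) X
    _ = matrixContract (-minkowskiMatrix n +
            c • vecMulVec (hyperboloidLift c X) (hyperboloidLift c X))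
          (fderiv ℝ (fderiv ℝ F) (hyperboloidLift c X)) +
        fderiv ℝ F (hyperboloidLift c X) (eulerLaplacian 1 c n (hyperboloidLift c) X) := by
      rw [eulerLaplacian, hessian_comp_eq, fderiv_comp_eq,
        hyperboloidJacobian_mul_cometric_mul_transpose hc, eulerLaplacian, map_add, map_smul,
        add_assoc]
    _ = eulerLaplacian (-minkowskiMatrix n) c n F (hyperboloidLift c X) := by
      rw [eulerLaplacian_hyperboloidLift hc, map_smul, eulerLaplacian]

end Hyperboloid

section Lorentz

lemma transpose_mul_mul_eq_of_mulVec_dotProduct {ι R : Type*} [Fintype ι] [CommRing R]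
    {A M : Matrix ι ι R}
    (h : ∀ W W' : ι → R, (A *ᵥ W) ⬝ᵥ (M *ᵥ (A *ᵥ W')) = W ⬝ᵥ (M *ᵥ W')) : Aᵀ * M * A = M := by
  classical
  ext i j
  have entry_eq := h (Pi.single i 1) (Pi.single j 1)
  rw [mulVec_mulVec, dotProduct_comm, dotProduct_mulVec, ← mulVec_transpose, dotProduct_comm,
    mulVec_mulVec] at entry_eq
  simpa [Matrix.mul_assoc] using entry_eq

lemma mul_mul_transpose_eq_of_transpose_mul_mul_eq {ι R : Type*} [Fintype ι] [DecidableEq ι]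
    [CommRing R] {A M : Matrix ι ι R} (hM : M * M = 1) (h : Aᵀ * M * A = M) :
    A * M * Aᵀ = M := by
  have left_inv : M * Aᵀ * M * A = 1 := by
    rw [Matrix.mul_assoc, Matrix.mul_assoc, ← Matrix.mul_assoc Aᵀ, h, hM]
  have right_inv : A * (M * Aᵀ * M) = 1 := mul_eq_one_comm.1 left_inv
  calc A * M * Aᵀ = A * (M * Aᵀ * M) * M := by simp only [Matrix.mul_assoc, hM, Matrix.mul_one]
    _ = M := by rw [right_inv, Matrix.one_mul]

lemma minkowskiMatrix_mul_self (n : ℕ) : minkowskiMatrix n * minkowskiMatrix n = 1 := by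
  rw [minkowskiMatrix, diagonal_mul_diagonal, ← diagonal_one]
  congr 1
  ext a
  cases a using Fin.cases <;> simp

lemma dotProduct_minkowskiMatrix_mulVec {n : ℕ} (W W' : Fin (n + 1) → ℝ) :
    W ⬝ᵥ (minkowskiMatrix n *ᵥ W') = W 0 * W' 0 - ∑ i : Fin n, W i.succ * W' i.succ := by
  simp [minkowskiMatrix, dotProduct, mulVec_diagonal, Fin.sum_univ_succ, sub_eq_add_neg]

lemma submatrix_succ_mul_neg_minkowskiMatrix_mul_transpose {n : ℕ}
    {A : Matrix (Fin (n + 1)) (Fin (n + 1)) ℝ}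
    (hA : A * minkowskiMatrix n * Aᵀ = minkowskiMatrix n) :
    A.submatrix Fin.succ id * -minkowskiMatrix n * (A.submatrix Fin.succ id)ᵀ = 1 := by
  rw [Matrix.mul_neg, Matrix.neg_mul, neg_eq_iff_eq_neg]
  ext i j
  refine congr($hA i.succ j.succ).trans ?_
  simp [minkowskiMatrix, diagonal_apply, Matrix.one_apply, apply_ite]

lemma eulerLaplacian_comp_lorentz {n : ℕ} {c : ℝ} (hc : 0 < c) {G : Type*} [NormedAddCommGroup G]
    [NormedSpace ℝ G] {A : Matrix (Fin (n + 1)) (Fin (n + 1)) ℝ}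
    (hA : A * minkowskiMatrix n * Aᵀ = minkowskiMatrix n) {f : (Fin n → ℝ) → G}
    (hf : ContDiff ℝ 2 f) (X : Fin n → ℝ) :
    eulerLaplacian 1 c n (fun Y => f fun i => (A *ᵥ hyperboloidLift c Y) i.succ) X =
      eulerLaplacian 1 c n f fun i => (A *ᵥ hyperboloidLift c X) i.succ := by
  let B : Matrix (Fin n) (Fin (n + 1)) ℝ := A.submatrix Fin.succ id
  have hfB : ContDiff ℝ 2 fun W => f (B *ᵥ W) :=
    hf.comp B.mulVecLin.toContinuousLinearMap.contDiff
  calc eulerLaplacian 1 c n (fun Y => f (B *ᵥ hyperboloidLift c Y)) X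
    _ = eulerLaplacian (-minkowskiMatrix n) c n (fun W => f (B *ᵥ W)) (hyperboloidLift c X) :=
      eulerLaplacian_comp_hyperboloidLift hc hfB X
    _ = eulerLaplacian (B * -minkowskiMatrix n * Bᵀ) c n f (B *ᵥ hyperboloidLift c X) :=
      eulerLaplacian_comp_mulVec B hf _ c n _
    _ = eulerLaplacian 1 c n f (B *ᵥ hyperboloidLift c X) := by
      rw [submatrix_succ_mul_neg_minkowskiMatrix_mul_transpose hA]

end Lorentz

section ConformalLaplacian

lemma form14_eq_dotProduct_minkowskiMatrix_mulVec (W W' : Fin 5 → ℝ) :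
    form14 W W' = W ⬝ᵥ (minkowskiMatrix 4 *ᵥ W') := by
  rw [dotProduct_minkowskiMatrix_mulVec, Fin.sum_univ_four, ← sub_sub, ← sub_sub, ← sub_sub]
  rfl

lemma degOp_eq_fderiv_apply_self (f : (Fin 4 → ℝ) → ℂ) (X : Fin 4 → ℝ) :
    degOp f X = fderiv ℝ f X X := by
  simp only [clm_apply_eq_sum_single (fderiv ℝ f X) X, degOp, pd, e4, Complex.real_smul]

lemma boxTilde_eq_eulerLaplacian_add (μ : ℝ) {f : (Fin 4 → ℝ) → ℂ} (hf : ContDiff ℝ 2 f)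
    (X : Fin 4 → ℝ) :
    boxTilde μ f X = eulerLaplacian 1 (μ ^ 2) (4 : ℕ) f X + 2 * (μ ^ 2 : ℝ) * f X := by
  have lap_eq : lap f X = matrixContract 1 (fderiv ℝ (fderiv ℝ f) X) := by
    rw [matrixContract_one]
    exact Finset.sum_congr rfl fun i _ => fderiv_fderiv_apply_const hf X (e4 i) (e4 i)
  have degOp_degOp_eq :
      degOp (degOp f) X = fderiv ℝ (fderiv ℝ f) X X X + fderiv ℝ f X X := by
    rw [degOp_eq_fderiv_apply_self, funext (degOp_eq_fderiv_apply_self f),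
      fderiv_fderiv_apply_self hf]
  rw [boxTilde, lap_eq, degOp_degOp_eq, degOp_eq_fderiv_apply_self, eulerLaplacian,
    matrixContract_add, matrixContract_smul, matrixContract_vecMulVec]
  simp only [Complex.real_smul]
  push_cast
  ring

lemma hat_eq_hyperboloidLift (μ : ℝ) : hat μ = hyperboloidLift (μ ^ 2) := by
  funext X
  simp [hat, hyperboloidLift, hyperboloidHeight, Nq, dotProduct, sq]

theorem stmt3_general (μ : ℝ) (hμ : μ ≠ 0) (A : Matrix (Fin 5) (Fin 5) ℝ)
    (hA : ∀ W W' : Fin 5 → ℝ, form14 (A.mulVec W) (A.mulVec W') = form14 W W')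
    (φ : (Fin 4 → ℝ) → ℂ) (hφ : ContDiff ℝ 2 φ) (X : Fin 4 → ℝ) :
    boxTilde μ (fun X' => φ (fun i : Fin 4 => A.mulVec (hat μ X') i.succ)) X =
      boxTilde μ φ (fun i : Fin 4 => A.mulVec (hat μ X) i.succ) := by
  have hc : 0 < μ ^ 2 := by positivity
  have lorentz : A * minkowskiMatrix 4 * Aᵀ = minkowskiMatrix 4 := by
    simp only [form14_eq_dotProduct_minkowskiMatrix_mulVec] at hA
    exact mul_mul_transpose_eq_of_transpose_mul_mul_eq (minkowskiMatrix_mul_self 4)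
      (transpose_mul_mul_eq_of_mulVec_dotProduct hA)
  have hT : ContDiff ℝ 2 fun (Y : Fin 4 → ℝ) (i : Fin 4) =>
      (A *ᵥ hyperboloidLift (μ ^ 2) Y) i.succ :=
    (A.submatrix Fin.succ id).mulVecLin.toContinuousLinearMap.contDiff.comp
      (contDiff_hyperboloidLift hc)
  rw [hat_eq_hyperboloidLift, boxTilde_eq_eulerLaplacian_add μ (hφ.fun_comp hT),
    eulerLaplacian_comp_lorentz hc lorentz hφ, boxTilde_eq_eulerLaplacian_add μ hφ]

end ConformalLaplacian

/-- If `A ∈ O(1,4)` maps the upper sheet of the hyperboloid `{⟨W,W⟩₍₁,₄₎ = μ⁻², w⁰ > 0}` to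
itself, and `T_A : ℝ⁴ → ℝ⁴` is the induced map (`A·X̂ = (T_A X)-hat`), then `□̃_μφ = 0` implies
`□̃_μ(φ ∘ T_A) = 0`. -/
theorem stmt3 (μ : ℝ) (hμ : 0 < μ) (A : Matrix (Fin 5) (Fin 5) ℝ)
    (hA : ∀ W W' : Fin 5 → ℝ, form14 (A.mulVec W) (A.mulVec W') = form14 W W')
    (hpos : ∀ X : Fin 4 → ℝ, 0 < A.mulVec (hat μ X) 0)
    (φ : (Fin 4 → ℝ) → ℂ) (hφ : ContDiff ℝ (⊤ : ℕ∞) φ)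
    (hsol : ∀ X, boxTilde μ φ X = 0) :
    ∀ X, boxTilde μ (fun X' => φ (fun i : Fin 4 => A.mulVec (hat μ X') i.succ)) X = 0 := by
  intro X
  rw [stmt3_general μ hμ.ne' A hA φ (hφ.of_le (by norm_cast)), hsol]
end
end

section
/- Fix μ>0 and let U ⊆ ℝ⁴ be open. For every smooth function φ:U→ℂ one has, on U, the commutator identity □̃_μ((μ⁻²+N(X))^{1/2}·φ) − (μ⁻²+N(X))^{1/2}·□̃_μφ = 2μ²(μ⁻²+N(X))^{1/2}·(deg φ + 2φ). -/
noncomputable section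

/-!
Write `s = (μ⁻² + N)^{1/2}`. Multiplication by `s` has the commutator
`φ ↦ (□̃_μ s - 2μ²s) φ + 2 (∇s · ∇φ + μ² deg s deg φ)` with `□̃_μ`. Everything about `s` comes
from differentiating `s² = μ⁻² + N`: this gives `s ∂ᵢs = xⁱ`, hence `s (∇s · ∇φ) = deg φ` and
`s deg s = N`, and differentiating once more shows that `s` is an eigenfunction, `□̃_μ s = 6μ²s`.
The first-order term is then `2 s⁻¹ (1 + μ²N) deg φ = 2μ² s deg φ`.
-/

open Topology Filter

/-- The bilinear (not sesquilinear) pairing `∇f · ∇g = Σᵢ ∂f/∂xⁱ ∂g/∂xⁱ` of the gradients of two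
functions, which is the cross term in the product rule for the Laplacian. -/
def gradDot (f g : (Fin 4 → ℝ) → ℂ) (X : Fin 4 → ℝ) : ℂ := ∑ i, pd i f X * pd i g X

section ProductRules

variable {f g : (Fin 4 → ℝ) → ℂ} {X : Fin 4 → ℝ}

lemma pd_congr (i : Fin 4) (h : f =ᶠ[𝓝 X] g) : pd i f X = pd i g X := by
  rw [pd, pd, h.fderiv_eq]

lemma pd_const_add (i : Fin 4) (c : ℂ) : pd i (fun Y => c + f Y) X = pd i f X := by
  rw [pd, pd, fderiv_const_add]

lemma pd_ofReal {f : (Fin 4 → ℝ) → ℝ} {f' : (Fin 4 → ℝ) →L[ℝ] ℝ} (i : Fin 4)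
    (hf : HasFDerivAt f f' X) : pd i (fun Y => (f Y : ℂ)) X = (f' (e4 i) : ℂ) := by
  have hf_complex : HasFDerivAt (fun Y => (f Y : ℂ)) (Complex.ofRealCLM.comp f') X :=
    Complex.ofRealCLM.hasFDerivAt.comp X hf
  rw [pd, hf_complex.fderiv]
  rfl

lemma pd_add (i : Fin 4) (hf : DifferentiableAt ℝ f X) (hg : DifferentiableAt ℝ g X) :
    pd i (f + g) X = pd i f X + pd i g X := by
  rw [pd, fderiv_add hf hg]
  rfl

lemma pd_mul (i : Fin 4) (hf : DifferentiableAt ℝ f X) (hg : DifferentiableAt ℝ g X) :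
    pd i (f * g) X = pd i f X * g X + f X * pd i g X := by
  simp only [pd, fderiv_mul hf hg, add_apply, smul_apply, smul_eq_mul]
  ring

lemma degOp_congr (h : f =ᶠ[𝓝 X] g) : degOp f X = degOp g X := by
  simp only [degOp, pd_congr _ h]

lemma degOp_add (hf : DifferentiableAt ℝ f X) (hg : DifferentiableAt ℝ g X) :
    degOp (f + g) X = degOp f X + degOp g X := by
  simp only [degOp, pd_add _ hf hg, mul_add, Finset.sum_add_distrib]

lemma degOp_mul (hf : DifferentiableAt ℝ f X) (hg : DifferentiableAt ℝ g X) :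
    degOp (f * g) X = degOp f X * g X + f X * degOp g X := by
  simp only [degOp, pd_mul _ hf hg, Finset.sum_mul, Finset.mul_sum, ← Finset.sum_add_distrib]
  exact Finset.sum_congr rfl fun i _ => by ring

lemma differentiableAt_ofReal_coord (i : Fin 4) :
    DifferentiableAt ℝ (fun Y : Fin 4 → ℝ => (Y i : ℂ)) X :=
  Complex.ofRealCLM.differentiableAt.comp X (differentiableAt_apply i X)

lemma differentiableAt_pd (i : Fin 4) (hf : ContDiffAt ℝ 2 f X) :
    DifferentiableAt ℝ (pd i f) X :=
  ((hf.fderiv_right (m := 1) (by norm_num)).differentiableAt one_ne_zero).clm_apply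
    (differentiableAt_const _)

lemma differentiableAt_degOp (hf : ContDiffAt ℝ 2 f X) : DifferentiableAt ℝ (degOp f) X :=
  DifferentiableAt.fun_sum fun i _ =>
    (differentiableAt_ofReal_coord i).mul (differentiableAt_pd i hf)

lemma eventually_differentiableAt (hf : ContDiffAt ℝ 2 f X) :
    ∀ᶠ Y in 𝓝 X, DifferentiableAt ℝ f Y :=
  (hf.eventually (by simp)).mono fun _ hY => hY.differentiableAt two_ne_zero

lemma lap_mul (hf : ContDiffAt ℝ 2 f X) (hg : ContDiffAt ℝ 2 g X) :
    lap (f * g) X = lap f X * g X + 2 * gradDot f g X + f X * lap g X := by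
  have pd_pd_mul (i : Fin 4) : pd i (pd i (f * g)) X =
      pd i (pd i f) X * g X + 2 * (pd i f X * pd i g X) + f X * pd i (pd i g) X := by
    have hfX := hf.differentiableAt two_ne_zero
    have hgX := hg.differentiableAt two_ne_zero
    have pd_mul_near : pd i (f * g) =ᶠ[𝓝 X] pd i f * g + f * pd i g := by
      filter_upwards [eventually_differentiableAt hf, eventually_differentiableAt hg]
        with Y hfY hgY using pd_mul i hfY hgY
    rw [pd_congr i pd_mul_near,
      pd_add i ((differentiableAt_pd i hf).mul hgX) (hfX.mul (differentiableAt_pd i hg)),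
      pd_mul i (differentiableAt_pd i hf) hgX, pd_mul i hfX (differentiableAt_pd i hg)]
    ring
  simp only [lap, gradDot, pd_pd_mul, Finset.sum_add_distrib, Finset.sum_mul, Finset.mul_sum]

lemma degOp_degOp_mul (hf : ContDiffAt ℝ 2 f X) (hg : ContDiffAt ℝ 2 g X) :
    degOp (degOp (f * g)) X =
      degOp (degOp f) X * g X + 2 * (degOp f X * degOp g X) + f X * degOp (degOp g) X := by
  have hfX := hf.differentiableAt two_ne_zero
  have hgX := hg.differentiableAt two_ne_zero
  have degOp_mul_near : degOp (f * g) =ᶠ[𝓝 X] degOp f * g + f * degOp g := by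
    filter_upwards [eventually_differentiableAt hf, eventually_differentiableAt hg]
      with Y hfY hgY using degOp_mul hfY hgY
  rw [degOp_congr degOp_mul_near,
    degOp_add ((differentiableAt_degOp hf).mul hgX) (hfX.mul (differentiableAt_degOp hg)),
    degOp_mul (differentiableAt_degOp hf) hgX, degOp_mul hfX (differentiableAt_degOp hg)]
  ring

lemma boxTilde_mul_sub (μ : ℝ) (hf : ContDiffAt ℝ 2 f X) (hg : ContDiffAt ℝ 2 g X) :
    boxTilde μ (f * g) X - f X * boxTilde μ g X =
      (boxTilde μ f X - 2 * (μ ^ 2 : ℝ) * f X) * g X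
        + 2 * (gradDot f g X + (μ ^ 2 : ℝ) * (degOp f X * degOp g X)) := by
  simp only [boxTilde, lap_mul hf hg, degOp_degOp_mul hf hg,
    degOp_mul (hf.differentiableAt two_ne_zero) (hg.differentiableAt two_ne_zero), Pi.mul_apply]
  ring

end ProductRules

section SumOfSquares

variable (X : Fin 4 → ℝ)

lemma pd_coord_self (i : Fin 4) : pd i (fun Y => (Y i : ℂ)) X = 1 := by
  rw [pd_ofReal i (hasFDerivAt_apply i X)]
  simp [e4]

lemma hasFDerivAt_Nq :
    HasFDerivAt Nq (∑ j, (2 * X j) • ContinuousLinearMap.proj (R := ℝ) (φ := fun _ => ℝ) j) X :=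
  HasFDerivAt.fun_sum fun j _ => by simpa using (hasFDerivAt_apply (𝕜 := ℝ) j X).pow 2

lemma pd_Nq (i : Fin 4) : pd i (fun Y => (Nq Y : ℂ)) X = 2 * X i := by
  rw [pd_ofReal i (hasFDerivAt_Nq X)]
  simp [e4, Pi.single_apply]

lemma sum_ofReal_sq : ∑ i, (X i : ℂ) ^ 2 = Nq X := by
  simp [Nq]

lemma degOp_Nq : degOp (fun Y => (Nq Y : ℂ)) X = 2 * Nq X := by
  simp only [degOp, pd_Nq]
  rw [← sum_ofReal_sq, Finset.mul_sum]
  exact Finset.sum_congr rfl fun i _ => by ring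

lemma Nq_nonneg : 0 ≤ Nq X := Finset.sum_nonneg fun i _ => sq_nonneg (X i)

lemma contDiff_Nq {n : WithTop ℕ∞} : ContDiff ℝ n Nq := by
  unfold Nq
  fun_prop

end SumOfSquares

section SquareRoot

variable {s : (Fin 4 → ℝ) → ℂ} {c : ℂ} {X : Fin 4 → ℝ}

lemma mul_pd_of_sq_eq (i : Fin 4) (hs : DifferentiableAt ℝ s X)
    (hsq : ∀ᶠ Y in 𝓝 X, s Y ^ 2 = c + Nq Y) : s X * pd i s X = X i := by
  have sq_near : s * s =ᶠ[𝓝 X] fun Y => c + Nq Y :=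
    hsq.mono fun Y hY => (sq (s Y)).symm.trans hY
  have pd_sq : pd i s X * s X + s X * pd i s X = 2 * X i := by
    rw [← pd_mul i hs hs, pd_congr i sq_near, pd_const_add, pd_Nq]
  linear_combination pd_sq / 2

lemma mul_gradDot_of_sq_eq (hs : DifferentiableAt ℝ s X)
    (hsq : ∀ᶠ Y in 𝓝 X, s Y ^ 2 = c + Nq Y) (g : (Fin 4 → ℝ) → ℂ) :
    s X * gradDot s g X = degOp g X := by
  simp only [gradDot, degOp, Finset.mul_sum, ← mul_assoc, mul_pd_of_sq_eq _ hs hsq]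

lemma mul_degOp_of_sq_eq (hs : DifferentiableAt ℝ s X)
    (hsq : ∀ᶠ Y in 𝓝 X, s Y ^ 2 = c + Nq Y) : s X * degOp s X = Nq X := by
  simp only [degOp, Finset.mul_sum, mul_left_comm (s X), mul_pd_of_sq_eq _ hs hsq,
    ← sum_ofReal_sq, sq]

lemma ne_zero_of_sq_eq (hc : c ≠ 0) (hs : DifferentiableAt ℝ s X)
    (hsq : ∀ᶠ Y in 𝓝 X, s Y ^ 2 = c + Nq Y) : s X ≠ 0 := by
  intro hsX
  have Nq_eq_zero : (Nq X : ℂ) = 0 := by rw [← mul_degOp_of_sq_eq hs hsq, hsX, zero_mul]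
  exact hc (by simpa [hsX, Nq_eq_zero] using hsq.self_of_nhds.symm)

lemma gradDot_self_add_mul_lap_of_sq_eq (hs : ContDiffAt ℝ 2 s X)
    (hsq : ∀ᶠ Y in 𝓝 X, s Y ^ 2 = c + Nq Y) : gradDot s s X + s X * lap s X = 4 := by
  have pd_sq_add (i : Fin 4) : pd i s X * pd i s X + s X * pd i (pd i s) X = 1 := by
    have mul_pd_near : s * pd i s =ᶠ[𝓝 X] fun Y => (Y i : ℂ) := by
      filter_upwards [eventually_differentiableAt hs, hsq.eventually_nhds] with Y hsY hsqY
        using mul_pd_of_sq_eq i hsY hsqY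
    rw [← pd_mul i (hs.differentiableAt two_ne_zero) (differentiableAt_pd i hs),
      pd_congr i mul_pd_near, pd_coord_self]
  simp [gradDot, lap, Finset.mul_sum, ← Finset.sum_add_distrib, pd_sq_add]

lemma degOp_sq_add_mul_degOp_degOp_of_sq_eq (hs : ContDiffAt ℝ 2 s X)
    (hsq : ∀ᶠ Y in 𝓝 X, s Y ^ 2 = c + Nq Y) :
    degOp s X ^ 2 + s X * degOp (degOp s) X = 2 * Nq X := by
  have mul_degOp_near : s * degOp s =ᶠ[𝓝 X] fun Y => (Nq Y : ℂ) := by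
    filter_upwards [eventually_differentiableAt hs, hsq.eventually_nhds] with Y hsY hsqY
      using mul_degOp_of_sq_eq hsY hsqY
  rw [sq, ← degOp_mul (hs.differentiableAt two_ne_zero) (differentiableAt_degOp hs),
    degOp_congr mul_degOp_near, degOp_Nq]

lemma boxTilde_eq_of_sq_eq {μ : ℝ} (hμ : μ ≠ 0) (hs : ContDiffAt ℝ 2 s X)
    (hsq : ∀ᶠ Y in 𝓝 X, s Y ^ 2 = ((μ ^ 2)⁻¹ : ℝ) + Nq Y) :
    boxTilde μ s X = 6 * (μ ^ 2 : ℝ) * s X := by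
  have hsX := hs.differentiableAt two_ne_zero
  have sX_ne_zero : s X ≠ 0 := ne_zero_of_sq_eq (by simpa using hμ) hsX hsq
  have hμ_complex : (μ : ℂ) ≠ 0 := mod_cast hμ
  have sq_eq : (μ : ℂ) ^ 2 * s X ^ 2 = 1 + μ ^ 2 * Nq X := by
    rw [hsq.self_of_nhds]
    push_cast
    field_simp
  have degOp_eq : degOp s X = Nq X / s X :=
    eq_div_of_mul_eq sX_ne_zero ((mul_comm _ _).trans (mul_degOp_of_sq_eq hsX hsq))
  have gradDot_eq : gradDot s s X = Nq X / s X ^ 2 := by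
    rw [sq, ← div_div, ← degOp_eq]
    exact eq_div_of_mul_eq sX_ne_zero ((mul_comm _ _).trans (mul_gradDot_of_sq_eq hsX hsq s))
  have lap_eq : lap s X = (4 - Nq X / s X ^ 2) / s X := by
    rw [eq_div_iff sX_ne_zero, ← gradDot_eq]
    linear_combination gradDot_self_add_mul_lap_of_sq_eq hs hsq
  have degOp_degOp_eq : degOp (degOp s) X = (2 * Nq X - (Nq X / s X) ^ 2) / s X := by
    rw [eq_div_iff sX_ne_zero, ← degOp_eq]
    linear_combination degOp_sq_add_mul_degOp_degOp_of_sq_eq hs hsq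
  rw [boxTilde, lap_eq, degOp_degOp_eq, degOp_eq]
  push_cast
  field_simp
  linear_combination (Nq X - 4 * s X ^ 2) * sq_eq

theorem stmt5_general {μ : ℝ} (hμ : μ ≠ 0) {φ : (Fin 4 → ℝ) → ℂ} (hs : ContDiffAt ℝ 2 s X)
    (hsq : ∀ᶠ Y in 𝓝 X, s Y ^ 2 = ((μ ^ 2)⁻¹ : ℝ) + Nq Y) (hφ : ContDiffAt ℝ 2 φ X) :
    boxTilde μ (fun Y => s Y * φ Y) X - s X * boxTilde μ φ X =
      2 * (μ ^ 2 : ℝ) * s X * (degOp φ X + 2 * φ X) := by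
  have hsX := hs.differentiableAt two_ne_zero
  have sX_ne_zero : s X ≠ 0 := ne_zero_of_sq_eq (by simpa using hμ) hsX hsq
  have first_order_term : gradDot s φ X + (μ ^ 2 : ℝ) * (degOp s X * degOp φ X) =
      (μ ^ 2 : ℝ) * s X * degOp φ X := by
    have hμ_complex : (μ : ℂ) ≠ 0 := mod_cast hμ
    refine mul_left_cancel₀ sX_ne_zero ?_
    calc s X * (gradDot s φ X + (μ ^ 2 : ℝ) * (degOp s X * degOp φ X))
        = s X * gradDot s φ X + (μ ^ 2 : ℝ) * (s X * degOp s X) * degOp φ X := by ring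
      _ = (μ ^ 2 : ℝ) * (((μ ^ 2)⁻¹ : ℝ) + Nq X) * degOp φ X := by
        rw [mul_gradDot_of_sq_eq hsX hsq, mul_degOp_of_sq_eq hsX hsq]
        push_cast
        field_simp
      _ = s X * ((μ ^ 2 : ℝ) * s X * degOp φ X) := by
        rw [← hsq.self_of_nhds]
        ring
  refine (boxTilde_mul_sub μ hs hφ).trans ?_
  rw [first_order_term, boxTilde_eq_of_sq_eq hμ hs hsq]
  ring

end SquareRoot

section RealSqrt

variable {c : ℝ}

lemma contDiffAt_ofReal_sqrt_add_Nq {n : WithTop ℕ∞} (hc : 0 < c) (X : Fin 4 → ℝ) :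
    ContDiffAt ℝ n (fun Y => (Real.sqrt (c + Nq Y) : ℂ)) X :=
  Complex.ofRealCLM.contDiff.contDiffAt.comp X <|
    (contDiff_const.add contDiff_Nq).contDiffAt.sqrt (add_pos_of_pos_of_nonneg hc (Nq_nonneg X)).ne'

lemma ofReal_sqrt_add_Nq_sq (hc : 0 ≤ c) (X : Fin 4 → ℝ) :
    (Real.sqrt (c + Nq X) : ℂ) ^ 2 = c + Nq X :=
  mod_cast Real.sq_sqrt (add_nonneg hc (Nq_nonneg X))

end RealSqrt

/-- Commutator identity: for every smooth `φ : U → ℂ` on an open `U ⊆ ℝ⁴`,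
`□̃_μ((μ⁻²+N(X))^{1/2}·φ) − (μ⁻²+N(X))^{1/2}·□̃_μφ = 2μ²(μ⁻²+N(X))^{1/2}·(deg φ + 2φ)` on `U`. -/
theorem stmt5 (μ : ℝ) (hμ : 0 < μ) (U : Set (Fin 4 → ℝ)) (hU : IsOpen U)
    (φ : (Fin 4 → ℝ) → ℂ) (hφ : ContDiffOn ℝ (⊤ : ℕ∞) φ U) :
    ∀ X ∈ U,
      boxTilde μ (fun Y => (Real.sqrt ((μ ^ 2)⁻¹ + Nq Y) : ℂ) * φ Y) X
        - (Real.sqrt ((μ ^ 2)⁻¹ + Nq X) : ℂ) * boxTilde μ φ X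
      = 2 * (μ ^ 2 : ℝ) * (Real.sqrt ((μ ^ 2)⁻¹ + Nq X) : ℂ) * (degOp φ X + 2 * φ X) :=
  fun X hX =>
    have hc : 0 < (μ ^ 2)⁻¹ := by positivity
    stmt5_general hμ.ne' (contDiffAt_ofReal_sqrt_add_Nq hc X)
      (.of_forall (ofReal_sqrt_add_Nq_sq hc.le))
      ((hφ.contDiffAt (hU.mem_nhds hX)).of_le (WithTop.coe_le_coe.2 le_top))
end
end
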